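/- For any finite strategic game, any player i, and any Choquet rationalizable action a_i ∈ R_i^∞, there exists a capacity type space for the game with finite type sets (each T_j finite with the discrete σ-algebra) and a type t_i ∈ CBCR_i with s_i(t_i) = a_i. More generally, for every k ≥ 1 and every a_i ∈ R_i^k there exists such a finite capacity type space and a type t_i ∈ B^kCR_i with s_i(t_i) = a_i. -/

import Mathlib

/-!
A single type space serves every level and the limit: the types of player `j` are the actions
of `j`, and the type `a` plays `a`. Its belief is one capacity that justifies `a` at all the
levels of the elimination procedure that `a` survives (`exists_uniform_justification`). For an
action that is never eliminated, such a capacity exists because the action sets decrease in a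
finite game and hence become constant (`Rk_stabilizes`).

A type surviving level `k + 1` then believes that the opponents' actions survive level `k`.
By induction on `k` these are types satisfying level-`k` belief in rationality, and belief is
monotone in the event (`Believes.mono`), so the type satisfies level-`k + 1` belief in
rationality (`Rk_subset_BkCRF`).
-/

open Classical

noncomputable section

/-- A capacity on a set of states `σ` (all subsets measurable): normalized and monotone. -/
structure Capacity (σ : Type*) where
  toFun : Set σ → ℝ
  empty' : toFun ∅ = 0
  univ' : toFun Set.univ = 1
  mono' : ∀ ⦃E F : Set σ⦄, E ⊆ F → toFun E ≤ toFun F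

/-- A set function `ν` believes an event `E` if `ν(Eᶜ ∪ F) = ν F` for every `F ⊆ E`. -/
def Believes {σ : Type*} (ν : Set σ → ℝ) (E : Set σ) : Prop :=
  ∀ F : Set σ, F ⊆ E → ν (Eᶜ ∪ F) = ν F

/-- The Choquet integral of a finite-range function `g` with respect to the set
function `ν`:  `∑ x ∈ range g, x * (ν {g ≥ x} - ν {g > x})`, which for the distinct
values `x₁ > x₂ > … > xₙ` of `g` equals `∑ᵢ xᵢ (ν(E₁ ∪ ⋯ ∪ Eᵢ) - ν(E₁ ∪ ⋯ ∪ Eᵢ₋₁))`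
where `Eᵢ = {s | g s = xᵢ}`. (Defined as `0` in the degenerate infinite-range case.) -/
def choquetInt {σ : Type*} (ν : Set σ → ℝ) (g : σ → ℝ) : ℝ :=
  if hf : (Set.range g).Finite then
    ∑ x ∈ hf.toFinset, x * (ν {s | x ≤ g s} - ν {s | x < g s})
  else 0

variable {I : Type} [Fintype I] [DecidableEq I]

/-- Profiles of the opponents of player `i`. -/
abbrev Opp (A : I → Type) (i : I) : Type := ∀ j : {j : I // j ≠ i}, A j.val

variable (A : I → Type) [∀ i, Fintype (A i)] [∀ i, Nonempty (A i)]
  (U : ∀ i, (∀ j, A j) → ℝ)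

/-- Combine an action of player `i` with a profile of opponents' actions. -/
def extendProf (i : I) (a : A i) (b : Opp A i) : ∀ j, A j :=
  fun j => if h : j = i then cast (congrArg A h.symm) a else b ⟨j, h⟩

/-- The payoff to `i` from action `a`, as a function of opponents' profiles. -/
def payoff (i : I) (a : A i) : Opp A i → ℝ :=
  fun b => U i (extendProf A i a b)

/-- `a` is a Choquet best response to the capacity (set function) `ν` on `A₋ᵢ`. -/
def IsCBR (i : I) (ν : Set (Opp A i) → ℝ) (a : A i) : Prop :=
  ∀ a' : A i, choquetInt ν (payoff A U i a') ≤ choquetInt ν (payoff A U i a)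

/-- The product `∏_{j ≠ i} Q j` viewed as a set of opponents' profiles. -/
def prodSet {τ : I → Type} (i : I) (Q : ∀ j, Set (τ j)) :
    Set (∀ j : {j : I // j ≠ i}, τ j.val) :=
  {b | ∀ j, b j ∈ Q j.val}

/-- The inductive definition of Choquet rationalizability: `(CR k).1 i` is the
set `C_i^{k+1}` of capacities and `(CR k).2 i` is the set `R_i^{k+1}` of actions
(indices shifted by one: Lean level `k` is paper level `k+1`). -/
def CR : ℕ → (∀ i, Set (Capacity (Opp A i))) × (∀ i, Set (A i))
  | 0 =>
      ⟨fun _ => Set.univ,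
       fun i => {a | ∃ ν ∈ (Set.univ : Set (Capacity (Opp A i))), IsCBR A U i ν.toFun a}⟩
  | k + 1 =>
      let p := CR k
      let C : ∀ i, Set (Capacity (Opp A i)) :=
        fun i => {ν ∈ p.1 i | Believes ν.toFun (prodSet i p.2)}
      ⟨C, fun i => {a | ∃ ν ∈ C i, IsCBR A U i ν.toFun a}⟩

/-- `Rk k i` is the set `R_i^{k+1}` of level-`(k+1)` Choquet rationalizable actions. -/
def Rk (k : ℕ) (i : I) : Set (A i) := (CR A U k).2 i

/-- `Rinf i = R_i^∞`, the Choquet rationalizable actions of player `i`. -/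
def Rinf (i : I) : Set (A i) := ⋂ k, Rk A U k i

/-- Profiles of opponents' types. -/
abbrev OppT (T : I → Type) (i : I) : Type := ∀ j : {j : I // j ≠ i}, T j.val

section TypeSpace

variable (T : I → Type) (s : ∀ i, T i → A i) (τ : ∀ i, T i → Capacity (OppT T i))

/-- The map sending a profile of opponents' types to the profile of their actions. -/
def smapF (i : I) : OppT T i → Opp A i := fun t j => s j.val (t j)

/-- Type `t`'s conjecture over `A₋ᵢ`: the set function `E ↦ τᵢ(t)(s₋ᵢ⁻¹(E))`. -/
def conjF (i : I) (t : T i) : Set (Opp A i) → ℝ :=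
  fun E => (τ i t).toFun (smapF A T s i ⁻¹' E)

/-- Type `t` believes the event `E ⊆ T₋ᵢ` (discrete σ-algebra: all `F ⊆ E`). -/
def TBelievesF (i : I) (t : T i) (E : Set (OppT T i)) : Prop :=
  ∀ F : Set (OppT T i), F ⊆ E → (τ i t).toFun (Eᶜ ∪ F) = (τ i t).toFun F

/-- `BkCRF k i` is the paper's `B^{k+1}CR_i` in the given (finite) capacity type space. -/
def BkCRF : ℕ → ∀ i, Set (T i)
  | 0 => fun i => {t | IsCBR A U i (conjF A T s τ i t) (s i t)}
  | k + 1 => fun i => {t | t ∈ BkCRF k i ∧ TBelievesF T τ i t (prodSet i (BkCRF k))}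

end TypeSpace

/-- Belief is monotone in the believed event. -/
theorem Believes.mono {σ : Type*} (ν : Capacity σ) {E E' : Set σ} (h : E ⊆ E')
    (hE : Believes ν.toFun E) : Believes ν.toFun E' := by
  intro F _
  apply le_antisymm _ (ν.mono' Set.subset_union_right)
  calc ν.toFun (E'ᶜ ∪ F) ≤ ν.toFun (Eᶜ ∪ (F ∩ E)) := by
        apply ν.mono'
        rintro x (hx | hx)
        · exact Or.inl fun hxE => hx (h hxE)
        · by_cases hxE : x ∈ E
          · exact Or.inr ⟨hx, hxE⟩
          · exact Or.inl hxE
    _ = ν.toFun (F ∩ E) := hE _ Set.inter_subset_right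
    _ ≤ ν.toFun F := ν.mono' Set.inter_subset_left

/-- The capacity of complete ignorance: every event other than the sure one has value `0`. -/
def ignorance (σ : Type*) [Nonempty σ] : Capacity σ where
  toFun E := if E = Set.univ then 1 else 0
  empty' := if_neg Set.empty_ne_univ
  univ' := if_pos rfl
  mono' E F h := by
    by_cases hE : E = Set.univ
    · have hF : F = Set.univ := Set.univ_subset_iff.1 (hE ▸ h)
      simp [hE, hF]
    · rw [if_neg hE]
      split_ifs <;> norm_num

theorem C_antitone (i : I) : Antitone fun k => (CR A U k).1 i :=
  antitone_nat_of_succ_le fun _ _ hν => hν.1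

theorem mem_Rk_iff (k : ℕ) (i : I) (a : A i) :
    a ∈ Rk A U k i ↔ ∃ ν ∈ (CR A U k).1 i, IsCBR A U i ν.toFun a := by
  cases k <;> rfl

theorem Rk_antitone : Antitone (Rk A U) := by
  intro k l hkl i a ha
  obtain ⟨ν, hν, hbr⟩ := (mem_Rk_iff A U l i a).1 ha
  exact (mem_Rk_iff A U k i a).2 ⟨ν, C_antitone A U i hkl hν, hbr⟩

/-- The game being finite, the decreasing sequence of action sets is eventually constant. -/
theorem Rk_stabilizes : ∃ N, ∀ k, N ≤ k → Rk A U N = Rk A U k := by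
  let f : ℕ →o (∀ i, Set (A i))ᵒᵈ := ⟨fun k => OrderDual.toDual (Rk A U k), Rk_antitone A U⟩
  exact WellFoundedGT.monotone_chain_condition f

/-- One capacity justifies the action `a` at every level that `a` survives. If `a` is
eliminated, take a capacity justifying it at the last level it survives; if it is never
eliminated, take one justifying it one level after the action sets have become constant. -/
theorem exists_uniform_justification (i : I) (a : A i) :
    ∃ ν : Capacity (Opp A i), ∀ k, a ∈ Rk A U k i →
      ν ∈ (CR A U k).1 i ∧ IsCBR A U i ν.toFun a := by
  by_cases h : ∃ k, a ∉ Rk A U k i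
  · obtain ⟨m, hm, hmin⟩ : ∃ m, a ∉ Rk A U m i ∧ ∀ n < m, a ∈ Rk A U n i :=
      ⟨Nat.find h, Nat.find_spec h, fun n hn => not_not.1 (Nat.find_min h hn)⟩
    have hlt : ∀ k, a ∈ Rk A U k i → k < m := fun k hk =>
      lt_of_not_ge fun hmk => hm (Rk_antitone A U hmk i hk)
    cases m with
    | zero => exact ⟨ignorance _, fun k hk => absurd (hlt k hk) (Nat.not_lt_zero k)⟩
    | succ n =>
      obtain ⟨ν, hν, hbr⟩ := (mem_Rk_iff A U n i a).1 (hmin n n.lt_succ_self)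
      exact ⟨ν, fun k hk => ⟨C_antitone A U i (Nat.le_of_lt_succ (hlt k hk)) hν, hbr⟩⟩
  · push Not at h
    obtain ⟨N, hN⟩ := Rk_stabilizes A U
    obtain ⟨ν, hν, hbr⟩ := (mem_Rk_iff A U (N + 1) i a).1 (h (N + 1))
    refine ⟨ν, fun k _ => ⟨?_, hbr⟩⟩
    have hlate : ∀ d, ν ∈ (CR A U (N + 1 + d)).1 i := by
      intro d
      induction d with
      | zero => exact hν
      | succ d ih =>
        refine ⟨ih, ?_⟩
        change Believes ν.toFun (prodSet i (Rk A U (N + 1 + d)))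
        rw [← hN (N + 1 + d) (by omega)]
        exact hν.2
    exact C_antitone A U i (show k ≤ N + 1 + k by omega) (hlate k)

/-- In a type space whose types are the actions themselves, each believing a capacity that
justifies it at every level it survives, level-`k` rationalizable types satisfy level-`k`
belief in rationality. -/
theorem Rk_subset_BkCRF (τ : ∀ j, A j → Capacity (Opp A j))
    (hτ : ∀ j a k, a ∈ Rk A U k j → τ j a ∈ (CR A U k).1 j ∧ IsCBR A U j (τ j a).toFun a)
    (k : ℕ) : ∀ j, Rk A U k j ⊆ BkCRF A U A (fun _ a => a) τ k j := by
  induction k with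
  | zero => exact fun j a ha => (hτ j a 0 ha).2
  | succ k ih =>
    intro j a ha
    refine ⟨ih j (Rk_antitone A U k.le_succ j ha), ?_⟩
    have hbel : Believes (τ j a).toFun (prodSet j (Rk A U k)) := (hτ j a (k + 1) ha).1.2
    have hprod : prodSet j (Rk A U k) ⊆ prodSet j (BkCRF A U A (fun _ a => a) τ k) :=
      fun b hb l => ih l.val (hb l)
    exact hbel.mono (τ j a) hprod

/-- every level-`(k+1)` Choquet rationalizable action (`Rk k` is the
paper's `R^{k+1}`) is played by some type, in some capacity type space with finite type
sets, that is Choquet rational and satisfies `k`-fold mutual belief in Choquet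
rationality; and every Choquet rationalizable action `a ∈ R_i^∞` is played by such a type
satisfying common belief in Choquet rationality. -/
theorem choquet_rationalizable_subset_CBCR [Nonempty I] (i : I) :
    (∀ k : ℕ, ∀ a ∈ Rk A U k i,
      ∃ (T : I → Type) (_ : ∀ j, Fintype (T j)) (s : ∀ j, T j → A j)
        (τ : ∀ j, T j → Capacity (OppT T j)) (t : T i),
        t ∈ BkCRF A U T s τ k i ∧ s i t = a) ∧
    (∀ a ∈ Rinf A U i,
      ∃ (T : I → Type) (_ : ∀ j, Fintype (T j)) (s : ∀ j, T j → A j)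
        (τ : ∀ j, T j → Capacity (OppT T j)) (t : T i),
        (t ∈ ⋂ k, BkCRF A U T s τ k i) ∧ s i t = a) := by
  choose τ hτ using exists_uniform_justification A U
  have hsub := Rk_subset_BkCRF A U τ hτ
  refine ⟨fun k a ha => ⟨A, inferInstance, fun _ a => a, τ, a, hsub k i ha, rfl⟩,
    fun a ha => ⟨A, inferInstance, fun _ a => a, τ, a, ?_, rfl⟩⟩
  exact Set.mem_iInter.2 fun k => hsub k i (Set.mem_iInter.1 ha k)

end
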